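/- In ℝ⁵ with the standard Euclidean inner product, let S be the set of four vectors (-2/3,-2/3,4/3,1/2,-1/2), (4/3,-2/3,-2/3,-1/2,1/2), (1/3,1/3,-2/3,-1/2,1/2), (-2/3,4/3,-2/3,-1/2,1/2). Then the minimum of ‖x‖² over x in the convex hull of S equals 1/24, and it is attained at the point β₆ = (-1/24,-1/24,1/12,-1/8,1/8). -/

import Mathlib

/-- A vector in `ℝ⁵` with the standard Euclidean inner product. -/
noncomputable def vec5 (a b c d e : ℝ) : EuclideanSpace ℝ (Fin 5) :=
  (WithLp.equiv 2 (Fin 5 → ℝ)).symm ![a, b, c, d, e]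

/-! A point `v` whose inner product with every element of `S` is at least `‖v‖ ^ 2` supports
`convexHull ℝ S`: the half-space `{x | ‖v‖ ^ 2 ≤ ⟪v, x⟫}` contains the hull, and by Cauchy–Schwarz
none of its points is shorter than `v`. Here all four weights lie on the bounding hyperplane
`⟪β₆, x⟫ = 1/24` of this half-space, and `β₆` lies on the segment joining the weights of
`x_{1,33}` and `x_{2,12}`. -/

section InnerProductSpace

variable {E : Type*} [SeminormedAddCommGroup E] [InnerProductSpace ℝ E] {v x : E} {S : Set E}

theorem norm_le_norm_of_norm_sq_le_inner (h : ‖v‖ ^ 2 ≤ inner ℝ v x) : ‖v‖ ≤ ‖x‖ := by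
  rcases (norm_nonneg v).eq_or_lt with hv | hv
  · exact hv ▸ norm_nonneg x
  · refine le_of_mul_le_mul_left ?_ hv
    calc
      ‖v‖ * ‖v‖ = ‖v‖ ^ 2 := (sq ‖v‖).symm
      _ ≤ inner ℝ v x := h
      _ ≤ ‖v‖ * ‖x‖ := real_inner_le_norm v x

theorem norm_le_norm_of_mem_convexHull (h : ∀ y ∈ S, ‖v‖ ^ 2 ≤ inner ℝ v y)
    (hx : x ∈ convexHull ℝ S) : ‖v‖ ≤ ‖x‖ := by
  obtain ⟨y, hy, hyx⟩ : ∃ y ∈ S, inner ℝ v y ≤ inner ℝ v x :=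
    ((innerₛₗ ℝ v).concaveOn convex_univ).exists_le_of_mem_convexHull (Set.subset_univ S) hx
  exact norm_le_norm_of_norm_sq_le_inner ((h y hy).trans hyx)

end InnerProductSpace

section vec5

variable (a b c d e a' b' c' d' e' : ℝ)

theorem vec5_add_vec5 : vec5 a b c d e + vec5 a' b' c' d' e' =
    vec5 (a + a') (b + b') (c + c') (d + d') (e + e') := by
  ext i
  fin_cases i <;> rfl

theorem smul_vec5 (t : ℝ) :
    t • vec5 a b c d e = vec5 (t * a) (t * b) (t * c) (t * d) (t * e) := by
  ext i
  fin_cases i <;> rfl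

theorem inner_vec5_vec5 : inner ℝ (vec5 a b c d e) (vec5 a' b' c' d' e') =
    a * a' + b * b' + c * c' + d * d' + e * e' := by
  simp [vec5, PiLp.inner_apply, Fin.sum_univ_five, mul_comm]

theorem norm_sq_vec5 : ‖vec5 a b c d e‖ ^ 2 = a ^ 2 + b ^ 2 + c ^ 2 + d ^ 2 + e ^ 2 := by
  rw [← real_inner_self_eq_norm_sq, inner_vec5_vec5]
  simp only [sq]

end vec5

/-- Table (2.3) for `(GL(3)×GL(2), Sym²k³⊗k²)`: the minimum of `‖x‖²` over the
convex hull of the listed weight vectors equals `1/24`, attained at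
`β₆ = ((-1/24) (-1/24) (1/12) (-1/8) (1/8))`. -/
theorem minsq_of_convexHull_weights :
    let S : Set (EuclideanSpace ℝ (Fin 5)) :=
      {vec5 (-2/3) (-2/3) (4/3) (1/2) (-1/2),
       vec5 (4/3) (-2/3) (-2/3) (-1/2) (1/2),
       vec5 (1/3) (1/3) (-2/3) (-1/2) (1/2),
       vec5 (-2/3) (4/3) (-2/3) (-1/2) (1/2)}
    let β : EuclideanSpace ℝ (Fin 5) := vec5 (-1/24) (-1/24) (1/12) (-1/8) (1/8)
    β ∈ convexHull ℝ S ∧ ‖β‖ ^ 2 = 1/24 ∧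
      ∀ x ∈ convexHull ℝ S, (1/24 : ℝ) ≤ ‖x‖ ^ 2 := by
  intro S β
  have norm_sq_β : ‖β‖ ^ 2 = 1/24 := by norm_num [β, norm_sq_vec5]
  have inner_β : ∀ y ∈ S, inner ℝ β y = 1/24 := by
    rintro y (rfl | rfl | rfl | rfl) <;> norm_num [β, inner_vec5_vec5]
  have β_mem_segment : β ∈ segment ℝ (vec5 (-2/3) (-2/3) (4/3) (1/2) (-1/2))
      (vec5 (1/3) (1/3) (-2/3) (-1/2) (1/2)) := by
    refine ⟨3/8, 5/8, by norm_num, by norm_num, by norm_num, ?_⟩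
    norm_num [β, smul_vec5, vec5_add_vec5]
  refine ⟨segment_subset_convexHull (by simp [S]) (by simp [S]) β_mem_segment, norm_sq_β,
    fun x hx ↦ ?_⟩
  have norm_β_le : ‖β‖ ≤ ‖x‖ :=
    norm_le_norm_of_mem_convexHull (fun y hy ↦ (norm_sq_β.trans (inner_β y hy).symm).le) hx
  calc
    (1/24 : ℝ) = ‖β‖ ^ 2 := norm_sq_β.symm
    _ ≤ ‖x‖ ^ 2 := by gcongr
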